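/- Let m ≥ 4 be even, and let e be an integer with 2 ≤ e ≤ m/2 and gcd(m,e) = 2. Then the supports of the codewords of Hamming weight 4 in the extended code C̄_E form a 2-(2^m, 4, 1) design, i.e., a Steiner system S(2,4,2^m): every 2-element subset of the 2^m coordinate positions is contained in the support of exactly one codeword of Hamming weight 4 of C̄_E. -/

import Mathlib

open Polynomial Finset

/-- The polynomial `c₀ + c₁x + ⋯ + c_{n−1}x^{n−1}` associated to a vector. -/
noncomputable def codePoly {n : ℕ} (c : Fin n → ZMod 2) : Polynomial (ZMod 2) :=
  ∑ i : Fin n, Polynomial.C (c i) * Polynomial.X ^ (i : ℕ)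

/-- The generator polynomial `g_E(x) = M_α(x) · M_{α^{1+2^e}}(x)`. -/
noncomputable def gE (m e : ℕ) (α : GaloisField 2 m) : Polynomial (ZMod 2) :=
  minpoly (ZMod 2) α * minpoly (ZMod 2) (α ^ (1 + 2 ^ e))

/-- The binary cyclic code `C_E` of length `2^m − 1` with generator polynomial `g_E`. -/
def CE (m e : ℕ) (α : GaloisField 2 m) : Set (Fin (2 ^ m - 1) → ZMod 2) :=
  {c | gE m e α ∣ codePoly c}

/-- The extended code `C̄_E ⊆ F_2^{2^m}`: the first `2^m − 1` coordinates form a codeword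
of `C_E` and all `2^m` coordinates sum to zero. -/
def CEbar (m e : ℕ) (α : GaloisField 2 m) : Set (Fin (2 ^ m) → ZMod 2) :=
  {c | (fun i : Fin (2 ^ m - 1) => c (Fin.castLE (Nat.sub_le _ _) i)) ∈ CE m e α ∧
       ∑ i, c i = 0}

/-!
In characteristic two, with `q = 2 ^ e`, a zero-sum quadruple `x, y, z, x + y + z` satisfies
`x^(1+q) + y^(1+q) + z^(1+q) + (x+y+z)^(1+q) = (x+y)^q (x+z) + (x+y) (x+z)^q`,
which vanishes if and only if `(x+z) / (x+y)` is fixed by `t ↦ t ^ q`. Since `gcd m e = 2`, the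
fixed field is the field of four elements. So, once coordinate positions are labelled by field
elements, the supports of the weight-four codewords are the affine lines over that subfield, and two
points determine a line.
-/

section FrobeniusFixedField

/-- The subfield of elements fixed by the `e`-fold Frobenius `t ↦ t ^ p ^ e`, that is, the
intersection of `F` with the field of `p ^ e` elements. -/
def frobeniusFixedField (F : Type*) [Field F] (p : ℕ) [ExpChar F p] (e : ℕ) : Subfield F :=
  (iterateFrobenius F p e).eqLocusField (RingHom.id F)

lemma mem_frobeniusFixedField {F : Type*} [Field F] {p : ℕ} [ExpChar F p] {e : ℕ} {t : F} :
    t ∈ frobeniusFixedField F p e ↔ t ^ p ^ e = t :=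
  Iff.rfl

variable {F : Type*} [Field F] {p : ℕ} [Fact p.Prime] [CharP F p]

lemma range_unitsMap_frobeniusFixedField (e : ℕ) :
    (Units.map (frobeniusFixedField F p e).subtype.toMonoidHom).range =
      (powMonoidHom (p ^ e - 1) : Fˣ →* Fˣ).ker := by
  have hpe : p ^ e ≠ 0 := pow_ne_zero e (Fact.out : p.Prime).ne_zero
  have mem_ker_iff (u : Fˣ) : u ^ (p ^ e - 1) = 1 ↔ (u : F) ∈ frobeniusFixedField F p e := by
    rw [mem_frobeniusFixedField, ← Units.val_pow_eq_pow_val, Units.val_inj,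
      ← pow_sub_one_mul hpe, mul_eq_right]
  ext u
  rw [MonoidHom.mem_ker, powMonoidHom_apply, mem_ker_iff]
  constructor
  · rintro ⟨v, rfl⟩
    exact (v : frobeniusFixedField F p e).2
  · intro hu
    exact ⟨Units.mk0 ⟨u, hu⟩ fun h ↦ u.ne_zero (congrArg Subtype.val h), Units.ext rfl⟩

theorem card_frobeniusFixedField [Finite F] {m : ℕ} (hF : Nat.card F = p ^ m) (e : ℕ) :
    Nat.card (frobeniusFixedField F p e) = p ^ m.gcd e := by
  have hinj : Function.Injective (Units.map (frobeniusFixedField F p e).subtype.toMonoidHom) :=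
    Units.map_injective Subtype.val_injective
  rw [Nat.card_eq_card_units_add_one, Nat.card_congr (MonoidHom.ofInjective hinj).toEquiv,
    range_unitsMap_frobeniusFixedField, IsCyclic.card_powMonoidHom_ker, Nat.card_units, hF,
    Nat.pow_sub_one_gcd_pow_sub_one,
    Nat.sub_add_cancel (Nat.one_le_pow _ _ (Fact.out : p.Prime).pos)]

end FrobeniusFixedField

section AffineLine

lemma ncard_affineSpan_pair (k : Type*) {V P : Type*} [DivisionRing k] [AddCommGroup V]
    [Module k V] [AddTorsor V P] {x y : P} (hxy : x ≠ y) :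
    (line[k, x, y] : Set P).ncard = Nat.card k := by
  have hrange : (line[k, x, y] : Set P) = Set.range (AffineMap.lineMap (k := k) x y) :=
    Set.ext fun _ ↦ mem_affineSpan_pair_iff_exists_lineMap_eq
  rw [hrange, Set.ncard_range_of_injective (AffineMap.lineMap_injective k hxy)]

lemma mem_affineSpan_pair_iff_div_mem {F : Type*} [Field F] (K : Subfield F) {x y z : F}
    (hxy : x ≠ y) : z ∈ line[K, x, y] ↔ (z - x) / (y - x) ∈ K := by
  have hyx : y - x ≠ 0 := sub_ne_zero.2 hxy.symm
  have smul_eq_iff (r : K) : r • (y - x) = z - x ↔ (r : F) = (z - x) / (y - x) := by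
    rw [Subfield.smul_def, smul_eq_mul, eq_div_iff hyx]
  rw [← vsub_vadd z x, vadd_left_mem_affineSpan_pair]
  simp only [vsub_eq_sub, vadd_eq_add, sub_add_cancel, smul_eq_iff]
  exact ⟨fun ⟨r, hr⟩ ↦ hr ▸ r.2, fun h ↦ ⟨⟨_, h⟩, rfl⟩⟩

end AffineLine

section GoldBlock

variable {F : Type*} [Field F]

/-- A four-element set of field elements on which the power sums of exponents `1` and `1 + 2 ^ e`
(a Gold exponent) vanish: the support of a weight-four codeword of the extended code, with
coordinate positions read as field elements. -/
structure IsGoldBlock (e : ℕ) (S : Finset F) : Prop where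
  card_eq : #S = 4
  sum_eq_zero : ∑ x ∈ S, x = 0
  sum_pow_eq_zero : ∑ x ∈ S, x ^ (1 + 2 ^ e) = 0

variable [CharP F 2] {e : ℕ}

lemma sum_gold_pow_eq (e : ℕ) (x y z : F) :
    x ^ (1 + 2 ^ e) + y ^ (1 + 2 ^ e) + z ^ (1 + 2 ^ e) + (x + y + z) ^ (1 + 2 ^ e) =
      (x + y) ^ 2 ^ e * (x + z) + (x + y) * (x + z) ^ 2 ^ e := by
  have two_eq_zero : (2 : F) = 0 := CharTwo.two_eq_zero
  simp only [pow_add, pow_one, add_pow_char_pow]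
  linear_combination (y * y ^ 2 ^ e + z * z ^ 2 ^ e) * two_eq_zero

theorem sum_gold_pow_eq_zero_iff_mem_line {x y : F} (hxy : x ≠ y) (z : F) :
    x ^ (1 + 2 ^ e) + y ^ (1 + 2 ^ e) + z ^ (1 + 2 ^ e) + (x + y + z) ^ (1 + 2 ^ e) = 0 ↔
      z ∈ line[frobeniusFixedField F 2 e, x, y] := by
  have hd : x + y ≠ 0 := mt CharTwo.add_eq_zero.1 hxy
  rw [sum_gold_pow_eq, mem_affineSpan_pair_iff_div_mem _ hxy, mem_frobeniusFixedField,
    CharTwo.sub_eq_add, CharTwo.sub_eq_add, add_comm z x, add_comm y x, div_pow,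
    div_eq_div_iff (pow_ne_zero _ hd) hd, CharTwo.add_eq_zero, mul_comm, mul_comm (x + y), eq_comm]

lemma isGoldBlock_iff_of_mem {S : Finset F} (hcard : #S = 4) {x y z : F} (hx : x ∈ S) (hy : y ∈ S)
    (hz : z ∈ S) (hxy : x ≠ y) (hxz : x ≠ z) (hyz : y ≠ z) :
    IsGoldBlock e S ↔ x + y + z ∈ S ∧ z ∈ line[frobeniusFixedField F 2 e, x, y] := by
  classical
  obtain ⟨w, hw, rfl⟩ : ∃ w ∉ ({x, y, z} : Finset F), insert w {x, y, z} = S :=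
    exists_eq_insert_iff.2 ⟨by grind, by rw [hcard, card_eq_three.2 ⟨x, y, z, hxy, hxz, hyz, rfl⟩]⟩
  have hsum (f : F → F) : ∑ s ∈ insert w {x, y, z}, f s = f x + f y + f z + f w := by
    rw [sum_insert hw, sum_insert (by grind), sum_pair hyz, add_comm, ← add_assoc]
  rw [← sum_gold_pow_eq_zero_iff_mem_line hxy]
  constructor
  · rintro ⟨-, hsum_zero, hpow_zero⟩
    obtain rfl : x + y + z = w := by rwa [hsum, CharTwo.add_eq_zero] at hsum_zero
    exact ⟨mem_insert_self _ _, by rwa [hsum] at hpow_zero⟩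
  · rintro ⟨hmem, hpow_zero⟩
    have hne_x : x + y + z ≠ x := by rwa [add_assoc, Ne, add_eq_left, CharTwo.add_eq_zero]
    have hne_y : x + y + z ≠ y := by rwa [add_right_comm, Ne, add_eq_right, CharTwo.add_eq_zero]
    have hne_z : x + y + z ≠ z := by rwa [Ne, add_eq_right, CharTwo.add_eq_zero]
    obtain rfl : x + y + z = w :=
      (mem_insert.1 hmem).resolve_right (by simp [hne_x, hne_y, hne_z])
    exact ⟨hcard, by rw [hsum, CharTwo.add_self_eq_zero], by rwa [hsum]⟩

theorem IsGoldBlock.subset_line {S : Finset F} (hS : IsGoldBlock e S) {x y : F} (hx : x ∈ S)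
    (hy : y ∈ S) (hxy : x ≠ y) : (S : Set F) ⊆ line[frobeniusFixedField F 2 e, x, y] := by
  intro z hz
  rcases eq_or_ne x z with rfl | hxz
  · exact left_mem_affineSpan_pair _ _ _
  rcases eq_or_ne y z with rfl | hyz
  · exact right_mem_affineSpan_pair _ _ _
  exact ((isGoldBlock_iff_of_mem hS.card_eq hx hy hz hxy hxz hyz).1 hS).2

theorem isGoldBlock_of_coe_eq_line {S : Finset F} (hcard : #S = 4) {x y : F} (hxy : x ≠ y)
    (hS : (S : Set F) = line[frobeniusFixedField F 2 e, x, y]) : IsGoldBlock e S := by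
  classical
  have mem_iff (s : F) : s ∈ S ↔ s ∈ line[frobeniusFixedField F 2 e, x, y] := Set.ext_iff.1 hS s
  have hx : x ∈ S := (mem_iff x).2 (left_mem_affineSpan_pair _ _ _)
  have hy : y ∈ S := (mem_iff y).2 (right_mem_affineSpan_pair _ _ _)
  obtain ⟨z, hz, hzxy⟩ : ∃ z ∈ S, z ∉ ({x, y} : Finset F) :=
    exists_mem_notMem_of_card_lt_card (by rw [card_pair hxy, hcard]; norm_num)
  obtain ⟨hzx, hzy⟩ : z ≠ x ∧ z ≠ y := by simpa using hzxy
  refine (isGoldBlock_iff_of_mem hcard hx hy hz hxy hzx.symm hzy.symm).2 ⟨?_, (mem_iff z).1 hz⟩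
  have hadd := AffineSubspace.smul_vsub_vadd_mem _ (1 : frobeniusFixedField F 2 e)
    ((mem_iff x).1 hx) ((mem_iff y).1 hy) ((mem_iff z).1 hz)
  rwa [one_smul, vsub_eq_sub, CharTwo.sub_eq_add, vadd_eq_add, ← mem_iff] at hadd

theorem existsUnique_isGoldBlock (hK : Nat.card (frobeniusFixedField F 2 e) = 4) {x y : F}
    (hxy : x ≠ y) : ∃! S : Finset F, IsGoldBlock e S ∧ x ∈ S ∧ y ∈ S := by
  have hncard := (ncard_affineSpan_pair (frobeniusFixedField F 2 e) hxy).trans hK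
  obtain ⟨L, hL⟩ := (Set.finite_of_ncard_ne_zero (hncard ▸ four_ne_zero)).exists_finset_coe
  have hLcard : #L = 4 := by rw [← hncard, ← hL, Set.ncard_coe_finset]
  refine ⟨L, ⟨isGoldBlock_of_coe_eq_line hLcard hxy hL, ?_, ?_⟩, ?_⟩
  · exact mem_coe.1 (hL ▸ left_mem_affineSpan_pair _ _ _)
  · exact mem_coe.1 (hL ▸ right_mem_affineSpan_pair _ _ _)
  · rintro S ⟨hS, hx, hy⟩
    have hsubset : S ⊆ L := coe_subset.1 (hL ▸ hS.subset_line hx hy hxy)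
    exact eq_of_subset_of_card_le hsubset (hLcard.trans hS.card_eq.symm).le

end GoldBlock

section CodewordSupport

variable {ι F : Type*} [Fintype ι]

/-- The support of a binary vector whose coordinates are labelled by field elements, read as a set
of labels. -/
def labelledSupport (φ : ι ≃ F) (c : ι → ZMod 2) : Finset F :=
  ({i | c i ≠ 0} : Finset ι).map φ.toEmbedding

variable (φ : ι ≃ F) (c : ι → ZMod 2)

lemma apply_mem_labelledSupport {i : ι} : φ i ∈ labelledSupport φ c ↔ c i ≠ 0 := by
  simp [labelledSupport]

lemma card_labelledSupport : #(labelledSupport φ c) = hammingNorm c :=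
  card_map _

lemma labelledSupport_bijective : Function.Bijective (labelledSupport φ) := by
  classical
  constructor
  · intro c d hcd
    funext i
    have hi : c i ≠ 0 ↔ d i ≠ 0 := by
      rw [← apply_mem_labelledSupport φ c, hcd, apply_mem_labelledSupport]
    generalize c i = a at hi ⊢
    generalize d i = b at hi ⊢
    decide +revert
  · intro S
    refine ⟨fun i ↦ if φ i ∈ S then 1 else 0, ?_⟩
    ext x
    obtain ⟨i, rfl⟩ := φ.surjective x
    simp [apply_mem_labelledSupport]

lemma sum_algebraMap_mul_eq_sum_labelledSupport {A : Type*} [CommSemiring A] [Algebra (ZMod 2) A]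
    (f : F → A) :
    ∑ i, algebraMap (ZMod 2) A (c i) * f (φ i) = ∑ x ∈ labelledSupport φ c, f x := by
  have hterm (i : ι) : algebraMap (ZMod 2) A (c i) * f (φ i) = if c i ≠ 0 then f (φ i) else 0 := by
    by_cases hi : c i = 0
    · simp [hi]
    · have hci : c i = 1 := Fin.eq_one_of_ne_zero (c i) hi
      rw [if_pos hi, hci, map_one, one_mul]
  simp only [hterm, labelledSupport, sum_map, sum_filter, Equiv.coe_toEmbedding]

lemma sum_eq_zero_iff_even_hammingNorm : ∑ i, c i = 0 ↔ Even (hammingNorm c) := by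
  have hsum := sum_algebraMap_mul_eq_sum_labelledSupport (Equiv.refl ι) c fun _ ↦ (1 : ZMod 2)
  simp only [Algebra.algebraMap_self, RingHom.id_apply, mul_one, sum_const, nsmul_eq_mul,
    card_labelledSupport] at hsum
  rw [hsum, ZMod.natCast_eq_zero_iff_even]

end CodewordSupport

section PrimitiveElement

variable {F : Type*} [Field F]

/-- The field element labelling a coordinate position of an extended cyclic code of length `N`: the
powers of `α` in order, and `0` at the last position, which carries the parity check. -/
def locator {N : ℕ} (α : F) (i : Fin N) : F :=
  if (i : ℕ) < N - 1 then α ^ (i : ℕ) else 0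

lemma aeval_codePoly_castLE [Algebra (ZMod 2) F] {N k : ℕ} (hN : N ≠ 0) (hk : k ≠ 0) (α : F)
    (c : Fin N → ZMod 2) :
    aeval (α ^ k) (codePoly fun i : Fin (N - 1) ↦ c (Fin.castLE (Nat.sub_le N 1) i)) =
      ∑ i, algebraMap (ZMod 2) F (c i) * locator α i ^ k := by
  obtain ⟨n, rfl⟩ := Nat.exists_eq_add_one_of_ne_zero hN
  rw [Fin.sum_univ_castSucc]
  simp [codePoly, locator, hk, pow_right_comm, Fin.castLE, Fin.castSucc, Fin.castAdd]

variable [Finite F] {α : F}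

lemma exists_pow_eq_of_orderOf_eq (hα : orderOf α = Nat.card F - 1) {x : F} (hx : x ≠ 0) :
    ∃ i < Nat.card F - 1, α ^ i = x := by
  have : NeZero (Nat.card F - 1) := ⟨(Nat.sub_pos_of_lt Finite.one_lt_card).ne'⟩
  have hprim : IsPrimitiveRoot α (Nat.card F - 1) := hα ▸ IsPrimitiveRoot.orderOf α
  have hx_pow : x ^ (Nat.card F - 1) = 1 := by
    have := Fintype.ofFinite F
    rw [Nat.card_eq_fintype_card, FiniteField.pow_card_sub_one_eq_one x hx]
  exact hprim.eq_pow_of_pow_eq_one hx_pow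

lemma locator_bijective {N : ℕ} (hF : Nat.card F = N) (hα : orderOf α = N - 1) :
    Function.Bijective (locator α : Fin N → F) := by
  subst hF
  refine (Nat.bijective_iff_surjective_and_card _).2 ⟨fun x ↦ ?_, Nat.card_fin _⟩
  rcases eq_or_ne x 0 with rfl | hx
  · exact ⟨⟨Nat.card F - 1, Nat.sub_one_lt Nat.card_pos.ne'⟩, if_neg (lt_irrefl _)⟩
  · obtain ⟨i, hi, rfl⟩ := exists_pow_eq_of_orderOf_eq hα hx
    exact ⟨⟨i, hi.trans_le (Nat.sub_le _ _)⟩, if_pos hi⟩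

-- Conjugacy makes `x ↦ x ^ (1 + 2 ^ e)` an automorphism; additivity at `x + 1` then forces
-- `x ^ 2 ^ e = x`.
theorem frobeniusFixedField_eq_top_of_minpoly_eq [CharP F 2] [Algebra (ZMod 2) F]
    (hα : orderOf α = Nat.card F - 1) {e : ℕ}
    (h : minpoly (ZMod 2) α = minpoly (ZMod 2) (α ^ (1 + 2 ^ e))) :
    frobeniusFixedField F 2 e = ⊤ := by
  obtain ⟨σ, hσα⟩ := (isConjRoot_iff_exists_algEquiv (K := ZMod 2) (L := F)).1 h.symm
  have hσ (x : F) : σ x = x ^ (1 + 2 ^ e) := by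
    rcases eq_or_ne x 0 with rfl | hx
    · rw [map_zero, zero_pow (by positivity)]
    · obtain ⟨i, -, rfl⟩ := exists_pow_eq_of_orderOf_eq hα hx
      rw [map_pow, hσα, pow_right_comm]
  refine eq_top_iff.2 fun x _ ↦ mem_frobeniusFixedField.2 ?_
  have hadd : σ (x + 1) = σ x + 1 := by rw [map_add, map_one]
  simp only [hσ, pow_add, pow_one, add_pow_char_pow, one_pow] at hadd
  rw [eq_comm, ← CharTwo.add_eq_zero]
  linear_combination hadd

end PrimitiveElement

lemma minpoly_mul_minpoly_dvd_iff {K A : Type*} [Field K] [Ring A] [IsDomain A] [Algebra K A]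
    {a b : A} (ha : IsIntegral K a) (hb : IsIntegral K b) (hab : minpoly K a ≠ minpoly K b)
    {f : K[X]} : minpoly K a * minpoly K b ∣ f ↔ aeval a f = 0 ∧ aeval b f = 0 := by
  have hcoprime : IsCoprime (minpoly K a) (minpoly K b) :=
    (minpoly.irreducible ha).coprime_iff_not_dvd.2 fun hdvd ↦
      hab (eq_of_monic_of_associated (minpoly.monic ha) (minpoly.monic hb)
        ((minpoly.irreducible ha).associated_of_dvd (minpoly.irreducible hb) hdvd))
  rw [← minpoly.dvd_iff, ← minpoly.dvd_iff]
  exact ⟨fun h ↦ ⟨dvd_of_mul_right_dvd h, dvd_of_mul_left_dvd h⟩, fun h ↦ hcoprime.mul_dvd h.1 h.2⟩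

section ExtendedCode

variable {m e : ℕ} {α : GaloisField 2 m}

lemma mem_CEbar_iff (hne : minpoly (ZMod 2) α ≠ minpoly (ZMod 2) (α ^ (1 + 2 ^ e)))
    (φ : Fin (2 ^ m) ≃ GaloisField 2 m) (hφ : ⇑φ = locator α) (c : Fin (2 ^ m) → ZMod 2) :
    c ∈ CEbar m e α ↔ (∑ x ∈ labelledSupport φ c, x = 0 ∧
      ∑ x ∈ labelledSupport φ c, x ^ (1 + 2 ^ e) = 0) ∧ Even (hammingNorm c) := by
  have aeval_eq_sum {k : ℕ} (hk : k ≠ 0) : aeval (α ^ k)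
      (codePoly fun i : Fin (2 ^ m - 1) ↦ c (Fin.castLE (Nat.sub_le _ _) i)) =
        ∑ x ∈ labelledSupport φ c, x ^ k := by
    rw [aeval_codePoly_castLE (pow_ne_zero m two_ne_zero) hk, ← hφ,
      sum_algebraMap_mul_eq_sum_labelledSupport φ c (· ^ k)]
  have aeval_eq_sum_one := aeval_eq_sum one_ne_zero
  simp only [pow_one] at aeval_eq_sum_one
  rw [CEbar, CE, Set.mem_ofPred_eq, Set.mem_ofPred_eq, gE,
    minpoly_mul_minpoly_dvd_iff (.of_finite _ _) (.of_finite _ _) hne, aeval_eq_sum_one,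
    aeval_eq_sum (by positivity), sum_eq_zero_iff_even_hammingNorm]

theorem mem_CEbar_and_hammingNorm_eq_four_iff
    (hne : minpoly (ZMod 2) α ≠ minpoly (ZMod 2) (α ^ (1 + 2 ^ e)))
    (φ : Fin (2 ^ m) ≃ GaloisField 2 m) (hφ : ⇑φ = locator α) (c : Fin (2 ^ m) → ZMod 2) :
    c ∈ CEbar m e α ∧ hammingNorm c = 4 ↔ IsGoldBlock e (labelledSupport φ c) := by
  rw [mem_CEbar_iff hne φ hφ]
  constructor
  · rintro ⟨⟨⟨hsum, hpow⟩, -⟩, hweight⟩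
    exact ⟨(card_labelledSupport φ c).trans hweight, hsum, hpow⟩
  · rintro ⟨hcard, hsum, hpow⟩
    have hweight : hammingNorm c = 4 := (card_labelledSupport φ c).symm.trans hcard
    exact ⟨⟨⟨hsum, hpow⟩, hweight ▸ by decide⟩, hweight⟩

end ExtendedCode

theorem steiner_system_S_2_4_2m_of_even_general (m e : ℕ) (hm : 4 ≤ m) (hgcd : Nat.gcd m e = 2)
    (α : GaloisField 2 m) (hα : orderOf α = 2 ^ m - 1) :
    ∀ T : Finset (Fin (2 ^ m)), T.card = 2 →
      {c : Fin (2 ^ m) → ZMod 2 |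
        c ∈ CEbar m e α ∧ hammingNorm c = 4 ∧ ∀ i ∈ T, c i ≠ 0}.ncard = 1 := by
  intro T hT
  obtain ⟨i, j, hij, rfl⟩ := card_eq_two.1 hT
  have hF : Nat.card (GaloisField 2 m) = 2 ^ m := GaloisField.card 2 m (by omega)
  have hK : Nat.card (frobeniusFixedField (GaloisField 2 m) 2 e) = 4 := by
    simp [card_frobeniusFixedField hF, hgcd]
  have htop : frobeniusFixedField (GaloisField 2 m) 2 e ≠ ⊤ := fun h ↦ by
    have hcard : 2 ^ m = 4 := by rw [← hF, ← Nat.card_congr Subfield.topEquiv.toEquiv, ← h, hK]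
    have hle : 2 ^ 4 ≤ 2 ^ m := Nat.pow_le_pow_right two_pos hm
    omega
  have hne := mt (frobeniusFixedField_eq_top_of_minpoly_eq (hF.symm ▸ hα)) htop
  let φ := Equiv.ofBijective (locator α) (locator_bijective hF hα)
  have mem_iff (c : Fin (2 ^ m) → ZMod 2) :
      (c ∈ CEbar m e α ∧ hammingNorm c = 4 ∧ ∀ k ∈ ({i, j} : Finset _), c k ≠ 0) ↔
        IsGoldBlock e (labelledSupport φ c) ∧
          φ i ∈ labelledSupport φ c ∧ φ j ∈ labelledSupport φ c := by
    rw [← and_assoc, mem_CEbar_and_hammingNorm_eq_four_iff hne φ rfl]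
    simp only [apply_mem_labelledSupport, forall_mem_insert, mem_singleton, forall_eq]
  simp only [Set.ncard_eq_one, Set.singleton_iff_unique_mem, Set.mem_ofPred_eq, mem_iff]
  exact (labelledSupport_bijective φ).existsUnique_iff.1
    (existsUnique_isGoldBlock hK (φ.injective.ne hij))

/-- For even `m ≥ 4` and `2 ≤ e ≤ m/2` with `gcd(m,e) = 2`,
the supports of the weight-4 codewords of `C̄_E` form a Steiner system `S(2, 4, 2^m)`. -/
theorem steiner_system_S_2_4_2m_of_even
    (m e : ℕ) (hm : 4 ≤ m) (hmeven : m % 2 = 0)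
    (he2 : 2 ≤ e) (heM : 2 * e ≤ m) (hgcd : Nat.gcd m e = 2)
    (α : GaloisField 2 m) (hα : orderOf α = 2 ^ m - 1) :
    ∀ T : Finset (Fin (2 ^ m)), T.card = 2 →
      {c : Fin (2 ^ m) → ZMod 2 |
        c ∈ CEbar m e α ∧ hammingNorm c = 4 ∧ ∀ i ∈ T, c i ≠ 0}.ncard = 1 :=
  steiner_system_S_2_4_2m_of_even_general m e hm hgcd α hα
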